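/- arXiv:1704.05641 — 7 statements merged into one kernel-verified Lean document; each statement's English description precedes it below -/
import Mathlib

section
/- The distance function d of the constructed MUFL instance is a metric on C ∪ F. That is, for all points p, q, r in C ∪ F: d(p,q) = 0 if and only if p = q, d(p,q) = d(q,p), and d(p,r) ≤ d(p,q) + d(q,r). -/
open Finset
open scoped ENNReal

/-- A literal over `N` variables: a variable index together with a polarity
(`true` = positive literal `x_n`, `false` = negated literal `x̄_n`). -/
abbrev Lit (N : ℕ) := Fin N × Bool

/-- The negation of a literal. -/
def Lit.neg {N : ℕ} (p : Lit N) : Lit N := (p.1, !p.2)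

/-- A 2-SAT clause: two literals over distinct variables. -/
structure Clause (N : ℕ) where
  l1 : Lit N
  l2 : Lit N
  distinct : l1.1 ≠ l2.1

/-- The literal `p` occurs in the clause `cl`. -/
def Clause.occurs {N : ℕ} (p : Lit N) (cl : Clause N) : Prop := p = cl.l1 ∨ p = cl.l2

instance {N : ℕ} (p : Lit N) (cl : Clause N) : Decidable (Clause.occurs p cl) := by
  unfold Clause.occurs; infer_instance

/-- The truth assignment `T` satisfies the clause `cl`. -/
def Clause.satisfied {N : ℕ} (T : Fin N → Bool) (cl : Clause N) : Prop :=
  T cl.l1.1 = cl.l1.2 ∨ T cl.l2.1 = cl.l2.2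

instance {N : ℕ} (T : Fin N → Bool) (cl : Clause N) : Decidable (Clause.satisfied T cl) := by
  unfold Clause.satisfied; infer_instance

/-- The point set of the construction: one point per literal (facility/literal points)
and one point per clause. -/
abbrev Pt (N M : ℕ) := Lit N ⊕ Fin M

/-- The SAT cost `w(B,T)`: total weight of the clauses satisfied by `T`. -/
def satCost {N M : ℕ} (b : Fin M → Clause N) (w : Fin M → ℕ) (T : Fin N → Bool) : ℕ :=
  ∑ m ∈ Finset.univ.filter (fun m => Clause.satisfied T (b m)), w m

/-- The distance function of the constructed MUFL instance. -/
noncomputable def dFL {N M : ℕ} (b : Fin M → Clause N) (w : Fin M → ℕ) (W c : ℝ) :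
    Pt N M → Pt N M → ℝ := fun p q =>
  if p = q then 0
  else
    match p, q with
    | Sum.inl x, Sum.inl y => if x.1 = y.1 then 1 else 2
    | Sum.inl x, Sum.inr m =>
        if Clause.occurs x (b m) then 1 + (w m : ℝ) / W
        else if Clause.occurs (Lit.neg x) (b m) then 1 + c * (w m : ℝ) / W
        else 2
    | Sum.inr m, Sum.inl x =>
        if Clause.occurs x (b m) then 1 + (w m : ℝ) / W
        else if Clause.occurs (Lit.neg x) (b m) then 1 + c * (w m : ℝ) / W
        else 2
    | Sum.inr _, Sum.inr _ => 2

/-- The MUFL cost `φ_FL(C,F,O)` of a set of open facilities `O`: every client connects to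
the nearest open facility (`∞` if no facility is open), plus opening cost `2` per
open facility. -/
noncomputable def phiFL {N M : ℕ} (d : Pt N M → Pt N M → ℝ) (O : Finset (Lit N)) : ℝ≥0∞ :=
  (∑ p : Pt N M, ⨅ o ∈ O, ENNReal.ofReal (d p (Sum.inl o))) + 2 * (O.card : ℝ≥0∞)

/-- A set of open facilities is reasonable if it has size `N` and contains a facility
corresponding to each variable. -/
def ReasonableFL {N : ℕ} (O : Finset (Lit N)) : Prop :=
  O.card = N ∧ ∀ n : Fin N, (n, true) ∈ O ∨ (n, false) ∈ O

/-- The truth assignment `T_O` induced by a set of open facilities: `x_n` is true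
iff the facility `x_n` is open. -/
def assignOf {N : ℕ} (O : Finset (Lit N)) : Fin N → Bool :=
  fun n => decide ((n, true) ∈ O)

/-- All distances between distinct points lie in the interval from `1` to `2`. -/
theorem dFL_bounds {N M : ℕ} (hM : 2 ≤ M) (b : Fin M → Clause N) (w : Fin M → ℕ)
    (hw : ∀ m, 0 < w m) (c : ℝ) (hc1 : 1 < c) (hc2 : c < 2)
    (W : ℝ) (hW : W = (M : ℝ) * ((Finset.univ.sup w : ℕ) : ℝ))
    (p q : Pt N M) (hpq : p ≠ q) : 1 ≤ dFL b w W c p q ∧ dFL b w W c p q ≤ 2 := by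
  have key : ∀ m, 0 ≤ (w m : ℝ) / W ∧ (w m : ℝ) / W ≤ 1 / 2 := by
    intro m
    have h1 : (w m : ℝ) ≤ ((Finset.univ.sup w : ℕ) : ℝ) := by
      exact_mod_cast Finset.le_sup (f := w) (Finset.mem_univ m)
    have h2 : (0 : ℝ) < w m := by exact_mod_cast hw m
    have h3 : (2 : ℝ) ≤ M := by exact_mod_cast hM
    have h4 : 2 * (w m : ℝ) ≤ W := by rw [hW]; nlinarith
    have h5 : 0 < W := by linarith
    refine ⟨by positivity, ?_⟩
    rw [div_le_iff₀ h5]; linarith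
  have key2 : ∀ m, 0 ≤ c * (w m : ℝ) / W ∧ c * (w m : ℝ) / W ≤ 1 := by
    intro m
    obtain ⟨h1, h2⟩ := key m
    rw [mul_div_assoc]
    constructor <;> nlinarith
  unfold dFL
  rw [if_neg hpq]
  rcases p with x | m <;> rcases q with y | k <;> dsimp only
  · split_ifs <;> norm_num
  · have := key k
    have := key2 k
    split_ifs <;> constructor <;> linarith
  · have := key m
    have := key2 m
    split_ifs <;> constructor <;> linarith
  · norm_num

/-- The distance function of the constructed MUFL instance is a metric on `C ∪ F`. -/
theorem dFL_isMetric {N M : ℕ} (hM : 2 ≤ M) (b : Fin M → Clause N) (w : Fin M → ℕ)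
    (hw : ∀ m, 0 < w m) (c : ℝ) (hc1 : 1 < c) (hc2 : c < 2)
    (W : ℝ) (hW : W = (M : ℝ) * ((Finset.univ.sup w : ℕ) : ℝ)) :
    (∀ p q : Pt N M, dFL b w W c p q = 0 ↔ p = q) ∧
    (∀ p q : Pt N M, dFL b w W c p q = dFL b w W c q p) ∧
    (∀ p q r : Pt N M, dFL b w W c p r ≤ dFL b w W c p q + dFL b w W c q r) := by
  have hb := dFL_bounds hM b w hw c hc1 hc2 W hW
  have h0 : ∀ p : Pt N M, dFL b w W c p p = 0 := fun p => by simp [dFL]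
  refine ⟨fun p q => ⟨fun h => ?_, fun h => h ▸ h0 p⟩, fun p q => ?_, fun p q r => ?_⟩
  · by_contra hne
    have := (hb p q hne).1
    linarith
  · by_cases h : p = q
    · rw [h]
    · have h' : q ≠ p := fun e => h e.symm
      unfold dFL
      rw [if_neg h, if_neg h']
      rcases p with x | m <;> rcases q with y | k <;> dsimp only
      simp only [eq_comm]
  · by_cases h1 : p = q
    · subst h1; rw [h0]; linarith
    by_cases h2 : q = r
    · subst h2; rw [h0]; linarith
    have a := (hb p q h1).1
    have a2 := (hb q r h2).1
    by_cases h3 : p = r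
    · subst h3; rw [h0]; linarith
    · have := (hb p r h3).2
      linarith
end

section
/- If O ⊆ F is a reasonable solution of the constructed MUFL instance, then φ_FL(C,F,O) = 3N + M + (1/W)·Σ_{b_m∈B} w(b_m) + ((c−1)/W)·Σ_{b_m∈B_f(T_O)} w(b_m). -/
open Finset
open scoped ENNReal

lemma mem_iff_of_reasonable {N : ℕ} {O : Finset (Lit N)} (hO : ReasonableFL O) (o : Lit N) :
    o ∈ O ↔ assignOf O o.1 = o.2 := by
  obtain ⟨hcard, hcov⟩ := hO
  have hsub : (Finset.univ.image (fun n : Fin N => ((n, assignOf O n) : Lit N))) ⊆ O := by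
    intro p hp
    simp only [Finset.mem_image, Finset.mem_univ, true_and] at hp
    obtain ⟨n, rfl⟩ := hp
    by_cases h : (n, true) ∈ O
    · simpa [assignOf, h] using h
    · have := (hcov n).resolve_left h
      simpa [assignOf, h] using this
  have hinj : Function.Injective (fun n : Fin N => ((n, assignOf O n) : Lit N)) := by
    intro a a' h
    exact congrArg Prod.fst h
  have heq := Finset.eq_of_subset_of_card_le hsub (by
    rw [Finset.card_image_of_injective _ hinj, hcard]; simp)
  constructor
  · intro h
    rw [← heq] at h
    simp only [Finset.mem_image, Finset.mem_univ, true_and] at h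
    obtain ⟨n, rfl⟩ := h
    rfl
  · intro h
    apply hsub
    simp only [Finset.mem_image, Finset.mem_univ, true_and]
    exact ⟨o.1, by rw [h]⟩

lemma iInf_ofReal_eq {α : Type*} (O : Finset α) (f : α → ℝ) (v : ℝ)
    (h1 : ∃ o ∈ O, f o = v) (h2 : ∀ o ∈ O, v ≤ f o) :
    (⨅ o ∈ O, ENNReal.ofReal (f o)) = ENNReal.ofReal v := by
  apply le_antisymm
  · obtain ⟨o, ho, rfl⟩ := h1
    exact iInf₂_le o ho
  · exact le_iInf₂ fun o ho => ENNReal.ofReal_le_ofReal (h2 o ho)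

/-- The MUFL cost of a reasonable solution. -/
theorem phiFL_of_reasonable {N M : ℕ} (hM : 2 ≤ M) (b : Fin M → Clause N) (w : Fin M → ℕ)
    (hw : ∀ m, 0 < w m) (c : ℝ) (hc1 : 1 < c) (hc2 : c < 2)
    (W : ℝ) (hW : W = (M : ℝ) * ((Finset.univ.sup w : ℕ) : ℝ))
    (O : Finset (Lit N)) (hO : ReasonableFL O) :
    phiFL (dFL b w W c) O = ENNReal.ofReal (
      3 * (N : ℝ) + (M : ℝ) + (1 / W) * (∑ m, (w m : ℝ)) +
      ((c - 1) / W) * (∑ m ∈ Finset.univ.filter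
        (fun m => ¬ Clause.satisfied (assignOf O) (b m)), (w m : ℝ))) := by
  have hmem := mem_iff_of_reasonable hO
  have hcard := hO.1
  generalize assignOf O = T at *
  have hM' : (2 : ℝ) ≤ M := by exact_mod_cast hM
  have hle : ∀ m, 2 * (w m : ℝ) ≤ W := by
    intro m
    have h : (w m : ℝ) ≤ ((Finset.univ.sup w : ℕ) : ℝ) := by
      exact_mod_cast Finset.le_sup (f := w) (Finset.mem_univ m)
    have h0 : (0 : ℝ) ≤ w m := by positivity
    rw [hW]; nlinarith
  have hwp : ∀ m, (0 : ℝ) < w m := fun m => by exact_mod_cast hw m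
  have hWp : 0 < W := by
    have := hle ⟨0, by omega⟩
    have := hwp ⟨0, by omega⟩
    linarith
  have hlit : ∀ x : Lit N, (⨅ o ∈ O, ENNReal.ofReal (dFL b w W c (Sum.inl x) (Sum.inl o))) =
      ENNReal.ofReal (if T x.1 = x.2 then 0 else 1) := by
    intro x
    apply iInf_ofReal_eq
    · refine ⟨(x.1, T x.1), (hmem _).2 rfl, ?_⟩
      obtain ⟨n, v⟩ := x
      by_cases h : T n = v
      · simp [dFL, h]
      · have h' : ¬ v = T n := fun e => h e.symm
        simp [dFL, h, h']
    · intro o ho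
      rw [hmem] at ho
      by_cases h : T x.1 = x.2
      · simp only [h, if_true, dFL]
        split_ifs <;> norm_num
      · have hne : x ≠ o := by rintro rfl; exact h ho
        simp only [h, if_false, dFL, Sum.inl.injEq, hne]
        split_ifs <;> norm_num
  have hcl : ∀ m : Fin M, (⨅ o ∈ O, ENNReal.ofReal (dFL b w W c (Sum.inr m) (Sum.inl o))) =
      ENNReal.ofReal (1 + (1 / W) * w m +
        ((c - 1) / W) * (if ¬ Clause.satisfied T (b m) then (w m : ℝ) else 0)) := by
    intro m
    have hr1 : (w m : ℝ) / W ≤ c * (w m : ℝ) / W := by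
      apply div_le_div_of_nonneg_right _ hWp.le
      nlinarith [hwp m]
    have hr2 : c * (w m : ℝ) / W ≤ 1 := by
      rw [div_le_one hWp]
      nlinarith [hwp m, hle m]
    apply iInf_ofReal_eq
    · by_cases hs : Clause.satisfied T (b m)
      · have key : ∃ o ∈ O, Clause.occurs o (b m) := by
          rcases hs with h | h
          · exact ⟨_, (hmem _).2 h, Or.inl rfl⟩
          · exact ⟨_, (hmem _).2 h, Or.inr rfl⟩
        obtain ⟨o, ho, hoc⟩ := key
        refine ⟨o, ho, ?_⟩
        simp [dFL, hoc, hs]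
        ring
      · have hno : ∀ o ∈ O, ¬ Clause.occurs o (b m) := by
          rintro o ho (rfl | rfl)
          · exact hs (Or.inl ((hmem _).1 ho))
          · exact hs (Or.inr ((hmem _).1 ho))
        have h1 : T (b m).l1.1 ≠ (b m).l1.2 := fun h => hs (Or.inl h)
        have hin : Lit.neg (b m).l1 ∈ O := by
          rw [hmem]
          simp only [Lit.neg]
          revert h1
          cases T (b m).l1.1 <;> cases (b m).l1.2 <;> simp
        have hoc : Clause.occurs (Lit.neg (Lit.neg (b m).l1)) (b m) := by
          left; simp [Lit.neg]
        refine ⟨_, hin, ?_⟩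
        simp [dFL, hno _ hin, hoc, hs]
        ring
    · intro o ho
      by_cases hs : Clause.satisfied T (b m)
      · have e : 1 + (1 / W) * (w m : ℝ) + ((c - 1) / W) *
          (if ¬ Clause.satisfied T (b m) then (w m : ℝ) else 0) = 1 + (w m : ℝ) / W := by
          simp [hs]; ring
        rw [e]
        simp only [dFL, reduceCtorEq, if_false]
        split_ifs <;> linarith
      · have hno : ¬ Clause.occurs o (b m) := by
          rintro (rfl | rfl)
          · exact hs (Or.inl ((hmem _).1 ho))
          · exact hs (Or.inr ((hmem _).1 ho))
        have e : 1 + (1 / W) * (w m : ℝ) + ((c - 1) / W) *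
          (if ¬ Clause.satisfied T (b m) then (w m : ℝ) else 0) = 1 + c * (w m : ℝ) / W := by
          simp [hs]; ring
        rw [e]
        simp only [dFL, reduceCtorEq, if_false, hno]
        split_ifs <;> linarith
  have hnn : ∀ m : Fin M, 0 ≤ 1 + (1 / W) * (w m : ℝ) +
        ((c - 1) / W) * (if ¬ Clause.satisfied T (b m) then (w m : ℝ) else 0) := by
    intro m
    have : 0 ≤ (c - 1) / W := div_nonneg (by linarith) hWp.le
    have : (0 : ℝ) ≤ if ¬ Clause.satisfied T (b m) then (w m : ℝ) else 0 := by
      split_ifs <;> simp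
    positivity
  have hnl : ∀ x : Lit N, (0 : ℝ) ≤ if T x.1 = x.2 then 0 else 1 := by
    intro x; split_ifs <;> norm_num
  have hsumlit : ∑ x : Lit N, (if T x.1 = x.2 then (0 : ℝ) else 1) = N := by
    rw [Fintype.sum_prod_type]
    have : ∀ n : Fin N, ∑ v : Bool, (if T n = v then (0 : ℝ) else 1) = 1 := by
      intro n
      cases h : T n <;> simp
    rw [Finset.sum_congr rfl (fun n _ => this n)]
    simp
  have h2 : (2 * (O.card : ENNReal)) = ENNReal.ofReal (2 * N) := by
    rw [hcard, ENNReal.ofReal_mul (by norm_num)]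
    simp
  unfold phiFL
  rw [Fintype.sum_sum_type, h2]
  simp only [hlit, hcl]
  rw [← ENNReal.ofReal_sum_of_nonneg (fun x _ => hnl x),
    ← ENNReal.ofReal_sum_of_nonneg (fun m _ => hnn m),
    ← ENNReal.ofReal_add (Finset.sum_nonneg fun x _ => hnl x) (Finset.sum_nonneg fun m _ => hnn m),
    ← ENNReal.ofReal_add (add_nonneg (Finset.sum_nonneg fun x _ => hnl x)
      (Finset.sum_nonneg fun m _ => hnn m)) (by positivity)]
  congr 1
  rw [hsumlit, Finset.sum_add_distrib, Finset.sum_add_distrib, ← Finset.mul_sum, ← Finset.mul_sum,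
    Finset.sum_filter]
  simp only [Finset.sum_const, Finset.card_univ, Fintype.card_fin, nsmul_eq_mul, mul_one]
  ring
end

section
/- If O and O' are reasonable solutions of the constructed MUFL instance, then w(B, T_O) < w(B, T_{O'}) if and only if φ_FL(C,F,O) > φ_FL(C,F,O'). -/
open Finset
open scoped ENNReal

/-- In a reasonable solution, exactly one literal of each variable is open. -/
lemma mem_reasonable {N : ℕ} {O : Finset (Lit N)} (hO : ReasonableFL O) (x : Lit N) :
    x ∈ O ↔ assignOf O x.1 = x.2 := by
  obtain ⟨hcard, hall⟩ := hO
  have hinj : Set.InjOn Prod.fst (O : Set (Lit N)) := by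
    apply Finset.injOn_of_card_image_eq
    have : O.image Prod.fst = Finset.univ := by
      ext n
      simp only [Finset.mem_image, Finset.mem_univ, iff_true]
      rcases hall n with h | h
      · exact ⟨_, h, rfl⟩
      · exact ⟨_, h, rfl⟩
    rw [this, hcard]; simp
  obtain ⟨n, s⟩ := x
  cases s with
  | true => simp [assignOf]
  | false =>
    simp only [assignOf, decide_eq_false_iff_not]
    constructor
    · intro h h'
      have := hinj h h' rfl
      simp at this
    · intro h
      exact (hall n).resolve_left h

lemma iInf_ofReal_eq_of_min {N M : ℕ} (d : Pt N M → Pt N M → ℝ) (O : Finset (Lit N)) (p : Pt N M)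
    (r : ℝ) (h1 : ∃ o ∈ O, d p (Sum.inl o) = r) (h2 : ∀ o ∈ O, r ≤ d p (Sum.inl o)) :
    (⨅ o ∈ O, ENNReal.ofReal (d p (Sum.inl o))) = ENNReal.ofReal r := by
  apply le_antisymm
  · obtain ⟨o, ho, rfl⟩ := h1
    exact iInf₂_le o ho
  · exact le_iInf₂ fun o ho => ENNReal.ofReal_le_ofReal (h2 o ho)

/-- Closed form of the cost of a reasonable solution. -/
lemma phiFL_eq {N M : ℕ} (b : Fin M → Clause N) (w : Fin M → ℕ)
    (c : ℝ) (hc1 : 1 < c) (W : ℝ) (hW : 0 < W)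
    (hle : ∀ m, c * (w m : ℝ) / W ≤ 1)
    (O : Finset (Lit N)) (hO : ReasonableFL O) :
    phiFL (dFL b w W c) O = ENNReal.ofReal
      ((N + ∑ m, (1 + c * (w m : ℝ) / W) + 2 * N)
        - (c - 1) / W * (satCost b w (assignOf O) : ℝ)) := by
  have hlt : ∀ m, (w m : ℝ) / W ≤ c * (w m : ℝ) / W := by
    intro m
    apply div_le_div_of_nonneg_right _ hW.le
    have : (0 : ℝ) ≤ w m := by positivity
    nlinarith
  have hnn : ∀ m, 0 ≤ (w m : ℝ) / W := fun m => by positivity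
  have hmem := mem_reasonable hO
  set T := assignOf O with hT
  have hlit : ∀ x : Lit N, (⨅ o ∈ O, ENNReal.ofReal (dFL b w W c (Sum.inl x) (Sum.inl o)))
      = ENNReal.ofReal (if T x.1 = x.2 then 0 else 1) := by
    intro x
    apply iInf_ofReal_eq_of_min
    · refine ⟨(x.1, T x.1), (hmem _).2 rfl, ?_⟩
      by_cases h : T x.1 = x.2
      · simp [dFL, h]
      · have : x ≠ (x.1, T x.1) := fun h' => h (congrArg Prod.snd h').symm
        simp [dFL, h, this]
    · intro o ho
      by_cases h : T x.1 = x.2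
      · simp only [h, dFL, if_true]
        split_ifs <;> norm_num
      · have : x ≠ o := by
          rintro rfl
          exact h ((hmem _).1 ho)
        simp only [h, dFL, Sum.inl.injEq, this, if_false]
        split_ifs <;> norm_num
  have hcl : ∀ m : Fin M, (⨅ o ∈ O, ENNReal.ofReal (dFL b w W c (Sum.inr m) (Sum.inl o)))
      = ENNReal.ofReal
        (if Clause.satisfied T (b m) then 1 + (w m : ℝ) / W else 1 + c * (w m : ℝ) / W) := by
    intro m
    have h1 := hlt m
    have h2 := hle m
    apply iInf_ofReal_eq_of_min
    · by_cases h : Clause.satisfied T (b m)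
      · rcases id h with h' | h'
        · exact ⟨(b m).l1, (hmem _).2 h', by simp [dFL, h, Clause.occurs]⟩
        · exact ⟨(b m).l2, (hmem _).2 h', by simp [dFL, h, Clause.occurs]⟩
      · have hs := h
        simp only [Clause.satisfied, not_or] at hs
        have hno : (b m).l1.neg ∈ O := by
          rw [hmem]
          have := hs.1
          simp only [Lit.neg]
          revert this
          cases T (b m).l1.1 <;> cases (b m).l1.2 <;> simp
        have hocc : ¬ Clause.occurs (b m).l1.neg (b m) := by
          rintro (h' | h')
          · rw [h', hmem] at hno; exact hs.1 hno
          · rw [h', hmem] at hno; exact hs.2 hno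
        have hocc2 : Clause.occurs (b m).l1.neg.neg (b m) := by
          left; simp [Lit.neg]
        exact ⟨_, hno, by simp [dFL, h, hocc, hocc2]⟩
    · intro o ho
      have ho' := (hmem _).1 ho
      by_cases h : Clause.satisfied T (b m)
      · simp only [h, dFL, if_true, reduceCtorEq, if_false]
        split_ifs <;> linarith
      · have hocc : ¬ Clause.occurs o (b m) := by
          rintro (h' | h')
          · exact h (Or.inl (h' ▸ ho'))
          · exact h (Or.inr (h' ▸ ho'))
        simp only [h, dFL, reduceCtorEq, if_false, hocc]
        split_ifs <;> linarith
  have e1 : ∑ x : Lit N, (if T x.1 = x.2 then (0 : ℝ) else 1) = N := by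
    rw [Fintype.sum_prod_type]
    have : ∀ n : Fin N, ∑ s : Bool, (if T n = s then (0 : ℝ) else 1) = 1 := by
      intro n
      cases T n <;> simp
    simp only [this]; simp
  have e2 : ∑ m, (if Clause.satisfied T (b m) then 1 + (w m : ℝ) / W else 1 + c * (w m : ℝ) / W)
      = ∑ m, (1 + c * (w m : ℝ) / W) - (c - 1) / W * (satCost b w T : ℝ) := by
    rw [satCost, Finset.sum_filter, Nat.cast_sum, Finset.mul_sum, ← Finset.sum_sub_distrib]
    refine Finset.sum_congr rfl fun m _ => ?_
    split_ifs
    · field_simp; ring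
    · simp
  have n1 : ∀ x ∈ (Finset.univ : Finset (Lit N)), (0 : ℝ) ≤ if T x.1 = x.2 then (0 : ℝ) else 1 := by
    intro x _; split_ifs <;> norm_num
  have n2 : ∀ m ∈ (Finset.univ : Finset (Fin M)), (0 : ℝ) ≤
      if Clause.satisfied T (b m) then 1 + (w m : ℝ) / W else 1 + c * (w m : ℝ) / W := by
    intro m _
    have h1 := hlt m
    have h2 := hnn m
    split_ifs <;> linarith
  have e3 : (2 * (O.card : ℝ≥0∞)) = ENNReal.ofReal (2 * N) := by
    rw [hO.1, ENNReal.ofReal_mul (by norm_num), ENNReal.ofReal_natCast]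
    norm_num
  rw [phiFL, Fintype.sum_sum_type]
  simp only [hlit, hcl]
  rw [e3, ← ENNReal.ofReal_sum_of_nonneg n1, ← ENNReal.ofReal_sum_of_nonneg n2,
    ← ENNReal.ofReal_add (Finset.sum_nonneg n1) (Finset.sum_nonneg n2),
    ← ENNReal.ofReal_add (add_nonneg (Finset.sum_nonneg n1) (Finset.sum_nonneg n2))
      (by positivity), e1, e2]
  congr 1
  ring

/-- For reasonable MUFL solutions, the SAT cost order is reversed by the MUFL
cost order. -/
theorem satCost_lt_iff_phiFL_gt {N M : ℕ} (hM : 2 ≤ M) (b : Fin M → Clause N) (w : Fin M → ℕ)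
    (hw : ∀ m, 0 < w m) (c : ℝ) (hc1 : 1 < c) (hc2 : c < 2)
    (W : ℝ) (hW : W = (M : ℝ) * ((Finset.univ.sup w : ℕ) : ℝ))
    (O O' : Finset (Lit N)) (hO : ReasonableFL O) (hO' : ReasonableFL O') :
    satCost b w (assignOf O) < satCost b w (assignOf O') ↔
      phiFL (dFL b w W c) O' < phiFL (dFL b w W c) O := by
  have hM0 : (2 : ℝ) ≤ M := by exact_mod_cast hM
  have hwle : ∀ m, (w m : ℝ) ≤ ((Finset.univ.sup w : ℕ) : ℝ) := fun m => by
    exact_mod_cast Finset.le_sup (f := w) (Finset.mem_univ m)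
  have hm0 : (0 : ℝ) < w ⟨0, by omega⟩ := by exact_mod_cast hw _
  have hS : (0 : ℝ) < ((Finset.univ.sup w : ℕ) : ℝ) := lt_of_lt_of_le hm0 (hwle _)
  have hWpos : 0 < W := by rw [hW]; positivity
  have hle : ∀ m, c * (w m : ℝ) / W ≤ 1 := by
    intro m
    rw [div_le_one hWpos, hW]
    have h1 := hwle m
    exact mul_le_mul (by linarith) h1 (by positivity) (by positivity)
  have hk : 0 < (c - 1) / W := div_pos (by linarith) hWpos
  have hsat : ∀ T, (c - 1) / W * (satCost b w T : ℝ) ≤ ∑ m, (1 + c * (w m : ℝ) / W) := by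
    intro T
    rw [satCost, Finset.sum_filter, Nat.cast_sum, Finset.mul_sum]
    refine Finset.sum_le_sum fun m _ => ?_
    have h0 : 0 ≤ (w m : ℝ) / W := by positivity
    have h1 : c * (w m : ℝ) / W = c * ((w m : ℝ) / W) := by ring
    have h2 : (c - 1) / W * (w m : ℝ) = (c - 1) * ((w m : ℝ) / W) := by ring
    split_ifs
    · rw [h1, h2]; linarith
    · rw [h1]
      simp only [Nat.cast_zero, mul_zero]
      have : 0 ≤ c * ((w m : ℝ) / W) := mul_nonneg (by linarith) h0
      linarith
  rw [phiFL_eq b w c hc1 W hWpos hle O hO, phiFL_eq b w c hc1 W hWpos hle O' hO']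
  have hN : 0 < N := lt_of_le_of_lt (Nat.zero_le _) (b ⟨0, by omega⟩).l1.1.isLt
  have hN' : (0 : ℝ) < N := by exact_mod_cast hN
  rw [ENNReal.ofReal_lt_ofReal_iff (by have := hsat (assignOf O); linarith),
    sub_lt_sub_iff_left, mul_lt_mul_iff_right₀ hk, Nat.cast_lt]
end

section
/- If O ⊆ F is locally optimal for the constructed MUFL instance with respect to the single-swap neighbourhood (i.e., no solution obtained from O by opening one closed facility, closing one open facility, or swapping one open facility for one closed facility has strictly smaller cost φ_FL), then O is reasonable. -/
open Finset
open scoped ENNReal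

lemma aux_W {M : ℕ} (hM : 2 ≤ M) (w : Fin M → ℕ) (hw : ∀ m, 0 < w m)
    (W : ℝ) (hW : W = (M : ℝ) * ((Finset.univ.sup w : ℕ) : ℝ)) :
    0 < W ∧ ∑ m, (w m : ℝ) / W ≤ 1 := by
  have hs : 0 < Finset.univ.sup w :=
    lt_of_lt_of_le (hw ⟨0, by omega⟩) (Finset.le_sup (f := w) (Finset.mem_univ _))
  have hW0 : 0 < W := by
    rw [hW]
    have : 0 < M := by omega
    positivity
  refine ⟨hW0, ?_⟩
  rw [← Finset.sum_div, div_le_one hW0, hW]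
  have : ∑ m, (w m : ℝ) ≤ ∑ _m : Fin M, ((Finset.univ.sup w : ℕ) : ℝ) :=
    Finset.sum_le_sum fun m _ => by
      exact_mod_cast Finset.le_sup (f := w) (Finset.mem_univ m)
  simpa using this

/-- Increase of the connection cost of a client when its facility moves to the negation. -/
noncomputable def closeInc {N M : ℕ} (w : Fin M → ℕ) (W c : ℝ) (a : Lit N) : Pt N M → ℝ :=
  Sum.elim (fun x => if x = a then 1 else 0) (fun m => (c - 1) * ((w m : ℝ) / W))

lemma closeInc_nonneg {N M : ℕ} (w : Fin M → ℕ) {W c : ℝ} (hW : 0 < W) (hc : 1 < c)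
    (a : Lit N) (p : Pt N M) : 0 ≤ closeInc w W c a p := by
  rcases p with x | m
  · simp only [closeInc, Sum.elim_inl]; split_ifs <;> norm_num
  · simp only [closeInc, Sum.elim_inr]
    have : 0 ≤ c - 1 := by linarith
    positivity

lemma neg_neg_lit {N : ℕ} (a : Lit N) : Lit.neg (Lit.neg a) = a := by
  simp [Lit.neg]

lemma neg_ne_lit {N : ℕ} (a : Lit N) : Lit.neg a ≠ a := by
  intro h
  have := congrArg Prod.snd h
  simp [Lit.neg] at this

lemma dFL_neg_le {N M : ℕ} (b : Fin M → Clause N) (w : Fin M → ℕ) {W c : ℝ} (hW : 0 < W)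
    (hc : 1 < c) (a : Lit N) (p : Pt N M) :
    dFL b w W c p (Sum.inl (Lit.neg a)) ≤ dFL b w W c p (Sum.inl a) + closeInc w W c a p := by
  rcases p with x | m
  · have h1 : (Lit.neg a).1 = a.1 := rfl
    by_cases hx : x = a
    · subst hx
      have := (neg_ne_lit x).symm
      simp [dFL, closeInc, this, h1]
    · by_cases hy : x = Lit.neg a
      · subst hy
        simp [dFL, closeInc, hx, h1]
      · simp [dFL, closeInc, hx, hy, h1]
  · have h0 : 0 ≤ (w m : ℝ) / W := by positivity
    have h2 : c * (w m : ℝ) / W = c * ((w m : ℝ) / W) := by ring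
    simp only [dFL, closeInc, neg_neg_lit, reduceCtorEq, if_false, Sum.elim_inr, h2]
    split_ifs <;> nlinarith

lemma sum_closeInc {N M : ℕ} (w : Fin M → ℕ) {W c : ℝ} (hc1 : 1 < c) (hc2 : c < 2)
    (hs : ∑ m, (w m : ℝ) / W ≤ 1) (a : Lit N) :
    ∑ p : Pt N M, closeInc w W c a p < 2 := by
  rw [Fintype.sum_sum_type]
  simp only [closeInc, Sum.elim_inl, Sum.elim_inr, Finset.sum_ite_eq', Finset.mem_univ, if_true,
    ← Finset.mul_sum]
  nlinarith

/-- Connection cost part. -/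
noncomputable def conn {N M : ℕ} (d : Pt N M → Pt N M → ℝ) (O : Finset (Lit N)) : ℝ≥0∞ :=
  ∑ p : Pt N M, ⨅ o ∈ O, ENNReal.ofReal (d p (Sum.inl o))

lemma conn_ne_top {N M : ℕ} (d : Pt N M → Pt N M → ℝ) (O : Finset (Lit N)) {o : Lit N}
    (ho : o ∈ O) : conn d O ≠ ⊤ := by
  unfold conn
  rw [ENNReal.sum_ne_top]
  intro p _
  exact ne_top_of_le_ne_top ENNReal.ofReal_ne_top (iInf₂_le o ho)

lemma phiFL_eq_s3 {N M : ℕ} (d : Pt N M → Pt N M → ℝ) (O : Finset (Lit N)) :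
    phiFL d O = conn d O + 2 * (O.card : ℝ≥0∞) := rfl

lemma close_lt {N M : ℕ} (b : Fin M → Clause N) (w : Fin M → ℕ) {W c : ℝ} (hW : 0 < W)
    (hc1 : 1 < c) (hc2 : c < 2) (hs : ∑ m, (w m : ℝ) / W ≤ 1) (O : Finset (Lit N)) (a : Lit N)
    (ha : a ∈ O) (hn : Lit.neg a ∈ O) :
    phiFL (dFL b w W c) (O.erase a) < phiFL (dFL b w W c) O := by
  have hn' : Lit.neg a ∈ O.erase a := Finset.mem_erase.2 ⟨neg_ne_lit a, hn⟩
  have key : conn (dFL b w W c) (O.erase a) ≤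
      conn (dFL b w W c) O + ENNReal.ofReal (∑ p : Pt N M, closeInc w W c a p) := by
    rw [ENNReal.ofReal_sum_of_nonneg (fun p _ => closeInc_nonneg w hW hc1 a p)]
    unfold conn
    rw [← Finset.sum_add_distrib]
    refine Finset.sum_le_sum fun p _ => ?_
    rw [← tsub_le_iff_right]
    refine le_iInf₂ fun o ho => ?_
    rw [tsub_le_iff_right]
    by_cases hoa : o = a
    · subst hoa
      refine (iInf₂_le (Lit.neg o) hn').trans ?_
      refine (ENNReal.ofReal_le_ofReal (dFL_neg_le b w hW hc1 o p)).trans ?_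
      exact ENNReal.ofReal_add_le
    · exact (iInf₂_le o (Finset.mem_erase.2 ⟨hoa, ho⟩)).trans le_self_add
  have h2 : ENNReal.ofReal (∑ p : Pt N M, closeInc w W c a p) < 2 := by
    have := sum_closeInc w hc1 hc2 hs a
    rw [ENNReal.ofReal_lt_iff_lt_toReal
      (Finset.sum_nonneg fun p _ => closeInc_nonneg w hW hc1 a p) (by simp)]
    simpa using this
  rw [phiFL_eq_s3, phiFL_eq_s3, ← Finset.card_erase_add_one ha]
  have hfin : conn (dFL b w W c) O + 2 * ((O.erase a).card : ℝ≥0∞) ≠ ⊤ :=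
    ENNReal.add_ne_top.2 ⟨conn_ne_top _ _ ha,
      ENNReal.mul_ne_top (by simp) (ENNReal.natCast_ne_top _)⟩
  calc _ ≤ conn (dFL b w W c) O + ENNReal.ofReal (∑ p : Pt N M, closeInc w W c a p)
          + 2 * ((O.erase a).card : ℝ≥0∞) := by gcongr
    _ = (conn (dFL b w W c) O + 2 * ((O.erase a).card : ℝ≥0∞))
          + ENNReal.ofReal (∑ p : Pt N M, closeInc w W c a p) := by ring
    _ < (conn (dFL b w W c) O + 2 * ((O.erase a).card : ℝ≥0∞)) + 2 :=
        ENNReal.add_lt_add_left hfin h2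
    _ = _ := by push_cast; ring

/-- Guaranteed savings of clients when opening `a` for an uncovered variable. -/
noncomputable def openDec {N M : ℕ} (a : Lit N) : Pt N M → ℝ≥0∞ :=
  Sum.elim (fun x => (if x = a then 2 else 0) + (if x = Lit.neg a then 1 else 0)) (fun _ => 0)

lemma open_lt {N M : ℕ} (b : Fin M → Clause N) (w : Fin M → ℕ) (W c : ℝ) (O : Finset (Lit N))
    (a : Lit N) (ha : ∀ o ∈ O, o.1 ≠ a.1) :
    phiFL (dFL b w W c) (insert a O) < phiFL (dFL b w W c) O := by
  have haO : a ∉ O := fun h => ha a h rfl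
  have key : conn (dFL b w W c) (insert a O) + ∑ p : Pt N M, openDec a p
      ≤ conn (dFL b w W c) O := by
    unfold conn
    rw [← Finset.sum_add_distrib]
    refine Finset.sum_le_sum fun p _ => ?_
    refine le_iInf₂ fun o ho => ?_
    have hmono := iInf₂_le (f := fun o (_ : o ∈ insert a O) =>
      ENNReal.ofReal (dFL b w W c p (Sum.inl o))) o (Finset.mem_insert_of_mem ho)
    have hself := iInf₂_le (f := fun o (_ : o ∈ insert a O) =>
      ENNReal.ofReal (dFL b w W c p (Sum.inl o))) a (Finset.mem_insert_self a O)
    have hoa := ha o ho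
    rcases p with x | m
    · by_cases hx : x = a
      · subst hx
        have h1 : x ≠ o := fun h => haO (h ▸ ho)
        have h2 := (neg_ne_lit x).symm
        refine (add_le_add_left hself _).trans ?_
        simp [dFL, openDec, h1, h2, hoa.symm]
      · by_cases hy : x = Lit.neg a
        · have h1 : x.1 = a.1 := by rw [hy]; rfl
          have h2 : x.1 ≠ o.1 := by rw [h1]; exact hoa.symm
          have h3 : x ≠ o := fun h => h2 (h ▸ rfl)
          refine (add_le_add_left hself _).trans ?_
          simp [dFL, openDec, h1, h3, hoa.symm, hx, ← hy, one_add_one_eq_two]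
        · simpa [openDec, hx, hy] using hmono
    · simpa [openDec] using hmono
  have hsum : ∑ p : Pt N M, openDec a p = 3 := by
    rw [Fintype.sum_sum_type]
    simp [openDec, Finset.sum_add_distrib]
    norm_num
  rw [hsum] at key
  rw [phiFL_eq_s3, phiFL_eq_s3, Finset.card_insert_of_notMem haO]
  have hfin : conn (dFL b w W c) (insert a O) + 2 * (O.card : ℝ≥0∞) ≠ ⊤ :=
    ENNReal.add_ne_top.2 ⟨conn_ne_top _ _ (Finset.mem_insert_self a O),
      ENNReal.mul_ne_top (by simp) (ENNReal.natCast_ne_top _)⟩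
  calc _ = (conn (dFL b w W c) (insert a O) + 2 * (O.card : ℝ≥0∞)) + 2 := by push_cast; ring
    _ < (conn (dFL b w W c) (insert a O) + 2 * (O.card : ℝ≥0∞)) + 3 :=
        ENNReal.add_lt_add_left hfin (by norm_num)
    _ = (conn (dFL b w W c) (insert a O) + 3) + 2 * (O.card : ℝ≥0∞) := by ring
    _ ≤ _ := by gcongr

/-- Every solution locally optimal for the single-swap neighbourhood (opening a
facility, closing a facility, or swapping two facilities) is reasonable. -/
theorem reasonable_of_localOpt {N M : ℕ} (hM : 2 ≤ M) (b : Fin M → Clause N) (w : Fin M → ℕ)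
    (hw : ∀ m, 0 < w m) (c : ℝ) (hc1 : 1 < c) (hc2 : c < 2)
    (W : ℝ) (hW : W = (M : ℝ) * ((Finset.univ.sup w : ℕ) : ℝ))
    (O : Finset (Lit N))
    (hopen : ∀ a ∉ O, ¬ phiFL (dFL b w W c) (insert a O) < phiFL (dFL b w W c) O)
    (hclose : ∀ a ∈ O, ¬ phiFL (dFL b w W c) (O.erase a) < phiFL (dFL b w W c) O)
    (hswap : ∀ a ∉ O, ∀ r ∈ O,
      ¬ phiFL (dFL b w W c) (insert a (O.erase r)) < phiFL (dFL b w W c) O) :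
    ReasonableFL O := by
  obtain ⟨hW0, hs⟩ := aux_W hM w hw W hW
  have hcov : ∀ n : Fin N, ∃ o ∈ O, o.1 = n := by
    intro n
    by_contra! hno
    exact hopen (n, true) (fun h => hno _ h rfl) (open_lt b w W c O (n, true) hno)
  have hinj : Set.InjOn Prod.fst (O : Set (Lit N)) := by
    intro x hx y hy hxy
    by_contra hne
    have hyx : y = Lit.neg x := by
      rcases x with ⟨x1, x2⟩
      rcases y with ⟨y1, y2⟩
      simp only at hxy
      subst hxy
      cases x2 <;> cases y2 <;> simp_all [Lit.neg]
    subst hyx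
    exact hclose x hx (close_lt b w hW0 hc1 hc2 hs O x hx hy)
  constructor
  · have himg : O.image Prod.fst = Finset.univ := by
      ext n
      simpa using hcov n
    rw [← Finset.card_image_of_injOn hinj, himg, Finset.card_univ, Fintype.card_fin]
  · intro n
    obtain ⟨⟨m, t⟩, ho, rfl⟩ := hcov n
    cases t
    · exact Or.inr ho
    · exact Or.inl ho
end

section
/- If O and O' are reasonable solutions of the constructed DKM instance, then w(B, T_O) < w(B, T_{O'}) if and only if φ_KM(C,O) > φ_KM(C,O'). -/
open Finset
open scoped ENNReal

/-- The distance function of the constructed DKM instance. -/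
noncomputable def dKM {N M : ℕ} (b : Fin M → Clause N) (w : Fin M → ℕ) (W c ε : ℝ) :
    Pt N M → Pt N M → ℝ := fun p q =>
  if p = q then 0
  else
    match p, q with
    | Sum.inl x, Sum.inl y => if x.1 = y.1 then 1 else 1 + 2 * ε
    | Sum.inl x, Sum.inr m =>
        if Clause.occurs x (b m) then 1 + ε * (3 / 2 + (w m : ℝ) / (2 * W))
        else if Clause.occurs (Lit.neg x) (b m) then 1 + ε * (3 / 2 + c * (w m : ℝ) / (2 * W))
        else 1 + 2 * ε
    | Sum.inr m, Sum.inl x =>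
        if Clause.occurs x (b m) then 1 + ε * (3 / 2 + (w m : ℝ) / (2 * W))
        else if Clause.occurs (Lit.neg x) (b m) then 1 + ε * (3 / 2 + c * (w m : ℝ) / (2 * W))
        else 1 + 2 * ε
    | Sum.inr _, Sum.inr _ => 1 + 2 * ε

/-- The K-means cost `φ_KM(C,O)` of a set of open locations `O ⊆ C`: every point connects
to the nearest open location (`∞` if `O = ∅`). -/
noncomputable def phiKM {N M : ℕ} (d : Pt N M → Pt N M → ℝ) (O : Finset (Pt N M)) : ℝ≥0∞ :=
  ∑ p : Pt N M, ⨅ o ∈ O, ENNReal.ofReal (d p o)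

/-- A set `O ⊆ C` is reasonable if it consists of literal points only, has size `N`,
and contains a point corresponding to each variable. -/
def ReasonableKM {N M : ℕ} (O : Finset (Pt N M)) : Prop :=
  (∀ p ∈ O, ∃ l : Lit N, p = Sum.inl l) ∧ O.card = N ∧
    ∀ n : Fin N, Sum.inl (n, true) ∈ O ∨ Sum.inl (n, false) ∈ O

/-- The truth assignment `T_O` induced by a set `O ⊆ C`: `x_n` is true iff the point
`x_n` is in `O`. -/
def assignOfKM {N M : ℕ} (O : Finset (Pt N M)) : Fin N → Bool :=
  fun n => decide (Sum.inl (n, true) ∈ O)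

lemma reasonable_eq {N M : ℕ} (O : Finset (Pt N M)) (hO : ReasonableKM O) :
    O = Finset.univ.image (fun n : Fin N => (Sum.inl (n, assignOfKM O n) : Pt N M)) := by
  obtain ⟨h1, h2, h3⟩ := hO
  symm
  apply Finset.eq_of_subset_of_card_le
  · intro p hp
    simp only [Finset.mem_image, Finset.mem_univ, true_and] at hp
    obtain ⟨n, rfl⟩ := hp
    by_cases h : (Sum.inl (n, true) : Pt N M) ∈ O
    · simpa [assignOfKM, h] using h
    · simpa [assignOfKM, h] using (h3 n).resolve_left h
  · rw [h2, Finset.card_image_of_injective]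
    · simp
    · intro a b hab
      simp only [Sum.inl.injEq, Prod.mk.injEq] at hab
      exact hab.1

/-- The real valued connection cost of each point. -/
noncomputable def connCost {N M : ℕ} (b : Fin M → Clause N) (w : Fin M → ℕ) (W c ε : ℝ)
    (T : Fin N → Bool) : Pt N M → ℝ
  | Sum.inl x => if T x.1 = x.2 then 0 else 1
  | Sum.inr m => if Clause.satisfied T (b m) then 1 + ε * (3 / 2 + (w m : ℝ) / (2 * W))
      else 1 + ε * (3 / 2 + c * (w m : ℝ) / (2 * W))

lemma phi_eq {N M : ℕ} (b : Fin M → Clause N) (w : Fin M → ℕ)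
    (c : ℝ) (hc1 : 1 < c) (W ε : ℝ) (hWpos : 0 < W) (hε : 0 < ε)
    (hcw : ∀ m, c * (w m : ℝ) ≤ W)
    (O : Finset (Pt N M)) (hO : ReasonableKM O) :
    phiKM (dKM b w W c ε) O =
      ENNReal.ofReal (∑ p, connCost b w W c ε (assignOfKM O) p) := by
  have hA : ∀ m, (w m : ℝ) / (2 * W) ≤ c * (w m : ℝ) / (2 * W) := by
    intro m
    have : (0 : ℝ) ≤ w m := Nat.cast_nonneg _
    gcongr
    nlinarith
  have hB : ∀ m, c * (w m : ℝ) / (2 * W) ≤ 1 / 2 := by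
    intro m
    rw [div_le_div_iff₀ (by positivity) (by norm_num)]
    linarith [hcw m]
  have hA0 : ∀ m, 0 ≤ (w m : ℝ) / (2 * W) := fun m => by positivity
  have hmem := reasonable_eq O hO
  generalize assignOfKM O = T at hmem
  subst hmem
  rw [ENNReal.ofReal_sum_of_nonneg]
  · unfold phiKM
    apply Finset.sum_congr rfl
    intro p _
    apply iInf_ofReal_eq
    · rcases p with x | m
      · refine ⟨Sum.inl (x.1, T x.1), by simp, ?_⟩
        obtain ⟨n, s⟩ := x
        by_cases h : T n = s
        · simp [dKM, connCost, h]
        · have h' : ¬ s = T n := fun e => h e.symm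
          simp [dKM, connCost, h, h']
      · by_cases h : Clause.satisfied T (b m)
        · have h0 := h
          rcases h with h | h
          · refine ⟨Sum.inl ((b m).l1.1, T (b m).l1.1), by simp, ?_⟩
            have : Clause.occurs ((b m).l1.1, T (b m).l1.1) (b m) := by
              left; rw [h]
            simp [dKM, connCost, h0, this]
          · refine ⟨Sum.inl ((b m).l2.1, T (b m).l2.1), by simp, ?_⟩
            have : Clause.occurs ((b m).l2.1, T (b m).l2.1) (b m) := by
              right; rw [h]
            simp [dKM, connCost, h0, this]
        · refine ⟨Sum.inl ((b m).l1.1, T (b m).l1.1), by simp, ?_⟩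
          have h1 : ¬ Clause.occurs ((b m).l1.1, T (b m).l1.1) (b m) := by
            rintro (e | e)
            · exact h (Or.inl (congrArg Prod.snd e))
            · have e2 := congrArg Prod.fst e
              exact (b m).distinct e2
          have h2 : Clause.occurs (Lit.neg ((b m).l1.1, T (b m).l1.1)) (b m) := by
            left
            have : T (b m).l1.1 ≠ (b m).l1.2 := fun e => h (Or.inl e)
            ext
            · rfl
            · simp only [Lit.neg]
              revert this
              cases T (b m).l1.1 <;> cases (b m).l1.2 <;> simp
          simp [dKM, connCost, h, h1, h2]
    · intro o ho
      simp only [Finset.mem_image, Finset.mem_univ, true_and] at ho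
      obtain ⟨n, rfl⟩ := ho
      rcases p with ⟨k, s⟩ | m
      · simp only [dKM, connCost, Sum.inl.injEq, Prod.mk.injEq]
        by_cases hk : k = n
        · subst hk
          by_cases h : T k = s
          · simp [h]
          · have h' : ¬ s = T k := fun e => h e.symm
            simp [h, h']
        · simp only [hk, false_and, if_false]
          split_ifs <;> linarith
      · have e1 := mul_le_mul_of_nonneg_left (hA m) hε.le
        have e2 := mul_le_mul_of_nonneg_left (hB m) hε.le
        simp only [dKM, connCost, reduceCtorEq, if_false]
        by_cases h1 : Clause.occurs (n, T n) (b m)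
        · have : Clause.satisfied T (b m) := by
            rcases h1 with e | e
            · left; rw [← e]
            · right; rw [← e]
          simp [h1, this]
        · simp only [h1, if_false]
          split_ifs <;> linarith
  · intro p _
    rcases p with x | m
    · simp only [connCost]; split_ifs <;> norm_num
    · have e0 := hA0 m
      have e1 := hA m
      simp only [connCost]
      split_ifs
      · positivity
      · have := e0.trans e1
        positivity

lemma sum_connCost {N M : ℕ} (b : Fin M → Clause N) (w : Fin M → ℕ) (W c ε : ℝ)
    (T : Fin N → Bool) :
    ∑ p, connCost b w W c ε T p =
      (N + ∑ m, (1 + ε * (3 / 2 + c * (w m : ℝ) / (2 * W))))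
        - ε * (c - 1) / (2 * W) * (satCost b w T : ℝ) := by
  rw [Fintype.sum_sum_type, Fintype.sum_prod_type]
  have h1 : ∀ n : Fin N, ∑ s : Bool, connCost b w W c ε T (Sum.inl (n, s)) = 1 := by
    intro n
    cases h : T n <;> simp [connCost, h]
  simp only [h1]
  have h2 : (satCost b w T : ℝ) =
      ∑ m, if Clause.satisfied T (b m) then (w m : ℝ) else 0 := by
    rw [satCost, Nat.cast_sum, Finset.sum_filter]
  rw [h2, Finset.mul_sum, add_sub_assoc, ← Finset.sum_sub_distrib]
  congr 1
  · simp
  · apply Finset.sum_congr rfl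
    intro m _
    simp only [connCost]
    split_ifs <;> ring

/-- For reasonable DKM solutions, the SAT cost order is reversed by the DKM
cost order. -/
theorem satCost_lt_iff_phiKM_gt {N M : ℕ} (hM : 2 ≤ M) (b : Fin M → Clause N) (w : Fin M → ℕ)
    (hw : ∀ m, 0 < w m) (c : ℝ) (hc1 : 1 < c) (hc2 : c < 2)
    (W : ℝ) (hW : W = (M : ℝ) * ((Finset.univ.sup w : ℕ) : ℝ))
    (ε : ℝ) (hε : ε = 1 / (4 * (N : ℝ) + 2 * (M : ℝ)))
    (O O' : Finset (Pt N M)) (hO : ReasonableKM O) (hO' : ReasonableKM O') :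
    satCost b w (assignOfKM O) < satCost b w (assignOfKM O') ↔
      phiKM (dKM b w W c ε) O' < phiKM (dKM b w W c ε) O := by
  have hMr : (2 : ℝ) ≤ M := by exact_mod_cast hM
  have hle : ∀ m, (w m : ℝ) ≤ ((Finset.univ.sup w : ℕ) : ℝ) := fun m => by
    exact_mod_cast Finset.le_sup (f := w) (Finset.mem_univ m)
  have hpos : (0 : ℝ) < ((Finset.univ.sup w : ℕ) : ℝ) :=
    lt_of_lt_of_le (by exact_mod_cast hw ⟨0, by omega⟩) (hle ⟨0, by omega⟩)
  have hWpos : 0 < W := by rw [hW]; positivity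
  have hεpos : 0 < ε := by rw [hε]; positivity
  have hcw : ∀ m, c * (w m : ℝ) ≤ W := fun m => by
    rw [hW]
    exact mul_le_mul (by linarith) (hle m) (Nat.cast_nonneg _) (by linarith)
  have hnn : ∀ T, 0 < ∑ p, connCost b w W c ε T p := by
    intro T
    apply Finset.sum_pos'
    · intro p _
      rcases p with x | m
      · simp only [connCost]; split_ifs <;> norm_num
      · simp only [connCost]
        split_ifs <;> positivity
    · refine ⟨Sum.inr ⟨0, by omega⟩, Finset.mem_univ _, ?_⟩
      simp only [connCost]
      split_ifs <;> positivity
  rw [phi_eq b w c hc1 W ε hWpos hεpos hcw O hO, phi_eq b w c hc1 W ε hWpos hεpos hcw O' hO',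
    ENNReal.ofReal_lt_ofReal_iff (hnn _), sum_connCost, sum_connCost, sub_lt_sub_iff_left]
  have hδ : 0 < ε * (c - 1) / (2 * W) := by
    have : 0 < c - 1 := by linarith
    positivity
  rw [mul_lt_mul_iff_right₀ hδ, Nat.cast_lt]
end

section
/- If O ⊆ C with |O| = N is locally optimal for the constructed DKM instance with respect to the single-swap neighbourhood (i.e., no set obtained from O by exchanging one element of O for one element of C \ O has strictly smaller cost φ_KM), then O is reasonable. -/
open Finset
open scoped ENNReal

theorem phi_eq_s8 {N M : ℕ} (d : Pt N M → Pt N M → ℝ) (hd : ∀ p q, 0 ≤ d p q) (O : Finset (Pt N M))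
    (hO : O.Nonempty) : phiKM d O = ENNReal.ofReal (∑ p, O.inf' hO (d p)) := by
  unfold phiKM
  rw [ENNReal.ofReal_sum_of_nonneg]
  · refine Finset.sum_congr rfl fun p _ => ?_
    apply le_antisymm
    · obtain ⟨o, ho, h⟩ := Finset.exists_mem_eq_inf' hO (d p)
      rw [h]
      exact iInf₂_le o ho
    · refine le_iInf₂ fun o ho => ENNReal.ofReal_le_ofReal (Finset.inf'_le _ ho)
  · intro p _
    exact Finset.le_inf' _ _ fun o _ => hd p o

theorem phi_lt {N M : ℕ} (d : Pt N M → Pt N M → ℝ) (hd : ∀ p q, 0 ≤ d p q)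
    (O O' : Finset (Pt N M)) (hO : O.Nonempty) (hO' : O'.Nonempty) (g : Pt N M → ℝ)
    (h : ∀ p, ∀ o ∈ O, ∃ o' ∈ O', d p o' ≤ d p o + g p) (hg : ∑ p, g p < 0) :
    phiKM d O' < phiKM d O := by
  rw [phi_eq_s8 d hd O hO, phi_eq_s8 d hd O' hO']
  have h0 : 0 ≤ ∑ p, O'.inf' hO' (d p) :=
    Finset.sum_nonneg fun p _ => Finset.le_inf' _ _ fun o _ => hd p o
  have h1 : ∑ p, O'.inf' hO' (d p) ≤ ∑ p, (O.inf' hO (d p) + g p) := by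
    refine Finset.sum_le_sum fun p _ => ?_
    obtain ⟨o, ho, e⟩ := Finset.exists_mem_eq_inf' hO (d p)
    obtain ⟨o', ho', h'⟩ := h p o ho
    rw [e]
    exact (Finset.inf'_le _ ho').trans h'
  rw [Finset.sum_add_distrib] at h1
  rw [ENNReal.ofReal_lt_ofReal_iff_of_nonneg h0]
  linarith

theorem swap_lt {N M : ℕ} (d : Pt N M → Pt N M → ℝ) (hd : ∀ p q, 0 ≤ d p q)
    (d0 : ∀ p, d p p = 0) (ε : ℝ) 
    (dlit : ∀ x y : Lit N, x.1 = y.1 → d (Sum.inl x) (Sum.inl y) ≤ 1)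
    (dunc : ∀ (x : Lit N) o, (∀ y : Lit N, y.1 = x.1 → o ≠ Sum.inl y) →
      1 + 3 / 2 * ε ≤ d (Sum.inl x) o)
    (O : Finset (Pt N M)) (r : Pt N M) (hr : r ∈ O) (x : Lit N)
    (hx : ∀ y : Lit N, y.1 = x.1 → Sum.inl y ∉ O) (e : Pt N M → ℝ) (he : ∀ p, 0 ≤ e p)
    (h : ∀ p, (∀ y : Lit N, y.1 = x.1 → p ≠ Sum.inl y) →
      ∃ o' ∈ insert (Sum.inl x) (O.erase r), d p o' ≤ d p r + e p)
    (hs : ∑ p, e p < 1 + 3 * ε) :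
    phiKM d (insert (Sum.inl x) (O.erase r)) < phiKM d O := by
  have hne : x ≠ Lit.neg x := by
    intro h; have := congrArg Prod.snd h; simp [Lit.neg] at this
  refine phi_lt d hd O _ ⟨r, hr⟩ ⟨_, Finset.mem_insert_self _ _⟩
    (fun p => e p + (if p = Sum.inl x then -(1 + 3 / 2 * ε) else 0)
      + (if p = Sum.inl (Lit.neg x) then -(3 / 2 * ε) else 0)) ?_ ?_
  · intro p o ho
    by_cases hp : ∃ y : Lit N, y.1 = x.1 ∧ p = Sum.inl y
    · obtain ⟨y, hy, rfl⟩ := hp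
      refine ⟨_, Finset.mem_insert_self _ _, ?_⟩
      have h1 := dunc y o (fun z hz hoz => hx z (hz.trans hy) (hoz ▸ ho))
      have h2 := he (Sum.inl y)
      by_cases hyx : y = x
      · subst hyx
        have := d0 (Sum.inl y : Pt N M)
        simp [hne]
        linarith
      · have hyn : y = Lit.neg x := by
          obtain ⟨y1, y2⟩ := y
          obtain ⟨x1, x2⟩ := x
          simp only [Lit.neg, Prod.mk.injEq] at *
          subst hy
          refine ⟨rfl, ?_⟩
          cases y2 <;> cases x2 <;> simp_all
        have := dlit y x hy
        subst hyn
        simp [hne.symm]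
        linarith
    · push Not at hp
      have e1 : p ≠ Sum.inl x := hp x rfl
      have e2 : p ≠ Sum.inl (Lit.neg x) := hp _ rfl
      simp only [if_neg e1, if_neg e2, add_zero]
      by_cases hor : o = r
      · subst hor
        exact h p hp
      · exact ⟨o, by simp [hor, ho], by linarith [he p]⟩
  · simp only [Finset.sum_add_distrib, Finset.sum_ite_eq', Finset.mem_univ, if_true]
    linarith

theorem neg_of_var {N : ℕ} {x y : Lit N} (h : x.1 = y.1) (hne : x ≠ y) : x = Lit.neg y := by
  obtain ⟨y1, y2⟩ := y
  obtain ⟨x1, x2⟩ := x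
  simp only [Lit.neg, Prod.mk.injEq] at *
  subst h
  refine ⟨rfl, ?_⟩
  cases y2 <;> cases x2 <;> simp_all

theorem neg_neg' {N : ℕ} (x : Lit N) : Lit.neg (Lit.neg x) = x := by
  simp [Lit.neg]

theorem near_iff {N : ℕ} (x : Lit N) (cl : Clause N) :
    (Clause.occurs x cl ∨ Clause.occurs (Lit.neg x) cl) ↔ (x.1 = cl.l1.1 ∨ x.1 = cl.l2.1) := by
  unfold Clause.occurs
  constructor
  · rintro ((h | h) | (h | h))
    · exact Or.inl (by rw [h])
    · exact Or.inr (by rw [h])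
    · exact Or.inl (by rw [← h]; rfl)
    · exact Or.inr (by rw [← h]; rfl)
  · rintro (h | h)
    · by_cases e : x = cl.l1
      · exact Or.inl (Or.inl e)
      · refine Or.inr (Or.inl ?_)
        rw [neg_of_var h e, neg_neg']
    · by_cases e : x = cl.l2
      · exact Or.inl (Or.inr e)
      · refine Or.inr (Or.inr ?_)
        rw [neg_of_var h e, neg_neg']

set_option maxHeartbeats 2000000 in
/-- Every solution of size `N` that is locally optimal for the single-swap
neighbourhood of the DKM instance is reasonable. -/
theorem reasonableKM_of_localOpt {N M : ℕ} (hM : 2 ≤ M) (b : Fin M → Clause N) (w : Fin M → ℕ)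
    (hw : ∀ m, 0 < w m) (c : ℝ) (hc1 : 1 < c) (hc2 : c < 2)
    (W : ℝ) (hW : W = (M : ℝ) * ((Finset.univ.sup w : ℕ) : ℝ))
    (ε : ℝ) (hε : ε = 1 / (4 * (N : ℝ) + 2 * (M : ℝ)))
    (O : Finset (Pt N M)) (hcard : O.card = N)
    (hswap : ∀ p ∈ O, ∀ q : Pt N M, q ∉ O →
      ¬ phiKM (dKM b w W c ε) (insert q (O.erase p)) < phiKM (dKM b w W c ε) O) :
    ReasonableKM O := by
  classical
  have hMr : (2 : ℝ) ≤ M := by exact_mod_cast hM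
  have hεpos : 0 < ε := by rw [hε]; positivity
  have hwle : ∀ m, (w m : ℝ) ≤ ((Finset.univ.sup w : ℕ) : ℝ) := fun m => by
    exact_mod_cast Finset.le_sup (f := w) (Finset.mem_univ m)
  have hw0 : ∀ m, (0 : ℝ) < w m := fun m => by exact_mod_cast hw m
  have hWpos : 0 < W := by
    have h := hwle ⟨0, by omega⟩
    have h' := hw0 ⟨0, by omega⟩
    rw [hW]
    exact mul_pos (by linarith) (by linarith)
  have hsumw : ∑ m, (w m : ℝ) ≤ W := by
    calc ∑ m, (w m : ℝ) ≤ ∑ _m : Fin M, ((Finset.univ.sup w : ℕ) : ℝ) :=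
          Finset.sum_le_sum fun m _ => hwle m
      _ = W := by rw [hW]; simp
  -- normalised weight
  obtain ⟨t, ht⟩ : ∃ t : Fin M → ℝ, ∀ m, t m = (w m : ℝ) / (2 * W) := ⟨_, fun _ => rfl⟩
  have hct : ∀ m, c * (w m : ℝ) / (2 * W) = c * t m := fun m => by rw [ht]; ring
  have ht0 : ∀ m, 0 < t m := fun m => by rw [ht]; have := hw0 m; positivity
  have ht1 : ∀ m, t m ≤ 1 / 4 := fun m => by
    rw [ht, div_le_iff₀ (by positivity)]
    have h1 := hwle m
    have h2 := hw0 m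
    rw [hW]; nlinarith
  have htsum : ∑ m, t m ≤ 1 / 2 := by
    simp only [ht]
    rw [← Finset.sum_div, div_le_iff₀ (by positivity)]
    linarith
  have hct1 : ∀ m, t m ≤ c * t m := fun m => by nlinarith [ht0 m]
  have hct2 : ∀ m, c * t m ≤ 1 / 2 := fun m => by nlinarith [ht0 m, ht1 m]
  obtain ⟨d, hdd⟩ : ∃ d, d = dKM b w W c ε := ⟨_, rfl⟩
  rw [← hdd] at hswap
  have d0 : ∀ p, d p p = 0 := fun p => by simp [hdd, dKM]
  have dll : ∀ x y : Lit N, x.1 ≠ y.1 → d (Sum.inl x) (Sum.inl y) = 1 + 2 * ε := fun x y h => by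
    have : x ≠ y := fun e => h (by rw [e])
    simp [hdd, dKM, h, this]
  have dlit1 : ∀ x y : Lit N, x.1 = y.1 → x ≠ y → d (Sum.inl x) (Sum.inl y) = 1 :=
    fun x y h h' => by simp [hdd, dKM, h, h']
  have dlit : ∀ x y : Lit N, x.1 = y.1 → d (Sum.inl x) (Sum.inl y) ≤ 1 := fun x y h => by
    by_cases e : x = y
    · rw [e, d0]; norm_num
    · rw [dlit1 x y h e]
  have dcc : ∀ m m' : Fin M, m ≠ m' → d (Sum.inr m) (Sum.inr m') = 1 + 2 * ε := fun m m' h => by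
    simp [hdd, dKM, h]
  have dsym : ∀ (x : Lit N) m, d (Sum.inr m) (Sum.inl x) = d (Sum.inl x) (Sum.inr m) :=
    fun x m => by simp [hdd, dKM]
  have docc : ∀ (x : Lit N) m, Clause.occurs x (b m) →
      d (Sum.inl x) (Sum.inr m) = 1 + ε * (3 / 2 + t m) := fun x m h => by
    simp [hdd, dKM, h, ht]
  have dfar : ∀ (x : Lit N) m, ¬ (x.1 = (b m).l1.1 ∨ x.1 = (b m).l2.1) →
      d (Sum.inl x) (Sum.inr m) = 1 + 2 * ε := fun x m h => by
    rw [← near_iff, not_or] at h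
    simp [hdd, dKM, h.1, h.2]
  have dnear : ∀ (x : Lit N) m, (x.1 = (b m).l1.1 ∨ x.1 = (b m).l2.1) →
      1 + ε * (3 / 2 + t m) ≤ d (Sum.inl x) (Sum.inr m) ∧
      d (Sum.inl x) (Sum.inr m) ≤ 1 + ε * (3 / 2 + c * t m) := fun x m h => by
    have hm := mul_le_mul_of_nonneg_left (hct1 m) hεpos.le
    by_cases ho : Clause.occurs x (b m)
    · rw [docc x m ho]
      constructor <;> linarith
    · have ho' := ((near_iff x (b m)).2 h).resolve_left ho
      have : d (Sum.inl x) (Sum.inr m) = 1 + ε * (3 / 2 + c * t m) := by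
        simp [hdd, dKM, ho, ho', hct]
      rw [this]
      constructor <;> linarith
  have dlc : ∀ (x : Lit N) m, 1 + 3 / 2 * ε ≤ d (Sum.inl x) (Sum.inr m) ∧
      d (Sum.inl x) (Sum.inr m) ≤ 1 + 2 * ε := fun x m => by
    by_cases h : x.1 = (b m).l1.1 ∨ x.1 = (b m).l2.1
    · have := dnear x m h
      have h1 := mul_pos hεpos (ht0 m)
      have h2 := mul_le_mul_of_nonneg_left (hct2 m) hεpos.le
      constructor <;> linarith
    · rw [dfar x m h]
      constructor <;> linarith
  have dle : ∀ p q, d p q ≤ 1 + 2 * ε := by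
    rintro (x | m) (y | m')
    · by_cases h : x.1 = y.1
      · linarith [dlit x y h]
      · exact (dll x y h).le
    · exact (dlc x m').2
    · rw [dsym]; exact (dlc y m).2
    · by_cases h : m = m'
      · rw [h, d0]; linarith
      · exact (dcc m m' h).le
  have hd : ∀ p q, 0 ≤ d p q := by
    rintro (x | m) (y | m')
    · by_cases h : x.1 = y.1
      · by_cases e : x = y
        · rw [e, d0]
        · rw [dlit1 x y h e]; norm_num
      · rw [dll x y h]; linarith
    · linarith [(dlc x m').1]
    · rw [dsym]; linarith [(dlc y m).1]
    · by_cases h : m = m'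
      · rw [h, d0]
      · rw [dcc m m' h]; linarith
  have dunc : ∀ (x : Lit N) o, (∀ y : Lit N, y.1 = x.1 → o ≠ Sum.inl y) →
      1 + 3 / 2 * ε ≤ d (Sum.inl x) o := by
    rintro x (y | m) h
    · rw [dll x y (fun e => h y e.symm rfl)]; linarith
    · exact (dlc x m).1
  have key : ∀ (r : Pt N M) (_ : r ∈ O) (x : Lit N)
      (_ : ∀ y : Lit N, y.1 = x.1 → Sum.inl y ∉ O) (e : Pt N M → ℝ) (_ : ∀ p, 0 ≤ e p)
      (_ : ∀ p, (∀ y : Lit N, y.1 = x.1 → p ≠ Sum.inl y) →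
        ∃ o' ∈ insert (Sum.inl x) (O.erase r), d p o' ≤ d p r + e p)
      (_ : ∑ p, e p < 1 + 3 * ε), False := fun r hr x hx e he h hs =>
    hswap r hr _ (hx x rfl) (swap_lt d hd d0 ε dlit dunc O r hr x hx e he h hs)
  -- no clause points
  have noclause : ∀ m : Fin M, Sum.inr m ∉ O := by
    intro m hm
    -- an uncovered variable
    have hunc : ∃ n : Fin N, ∀ y : Lit N, y.1 = n → (Sum.inl y : Pt N M) ∉ O := by
      by_contra hcon
      push Not at hcon
      choose f hf1 hf2 using hcon
      have h1 : (Finset.univ.image fun n => (Sum.inl (f n) : Pt N M)) ⊆ O.erase (Sum.inr m) := by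
        intro p hp
        simp only [Finset.mem_image, Finset.mem_univ, true_and] at hp
        obtain ⟨n, rfl⟩ := hp
        simp [hf2]
      have h2 := Finset.card_le_card h1
      rw [Finset.card_image_of_injective, Finset.card_erase_of_mem hm, hcard] at h2
      · have h3 : 0 < O.card := Finset.card_pos.2 ⟨_, hm⟩
        simp at h2
        omega
      · intro n n' h
        have := congrArg Prod.fst (Sum.inl.inj h)
        rwa [hf1, hf1] at this
    -- clause with an uncovered literal
    have B1 : ∀ l l' : Lit N, Clause.occurs l (b m) →
        (∀ z : Lit N, (z.1 = (b m).l1.1 ∨ z.1 = (b m).l2.1) → z.1 = l.1 ∨ z.1 = l'.1) →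
        (∀ y : Lit N, y.1 = l.1 → (Sum.inl y : Pt N M) ∉ O) → False := by
      intro l l' hl hll hun
      refine key _ hm l hun
        (fun p => (if p = Sum.inr m then 1 + 7 / 4 * ε else 0)
          + (if p = Sum.inl l' then ε / 2 else 0)
          + (if p = Sum.inl (Lit.neg l') then ε / 2 else 0)) ?_ ?_ ?_
      · intro p
        split_ifs <;> linarith
      · intro p hp
        refine ⟨_, Finset.mem_insert_self _ _, ?_⟩
        rcases p with z | m'
        · have h1 := dle (Sum.inl z) (Sum.inl l)
          have h2 := (dlc z m).1
          by_cases hz : z.1 = (b m).l1.1 ∨ z.1 = (b m).l2.1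
          · rcases hll z hz with h | h
            · exact absurd rfl (hp z h)
            · by_cases e : z = l'
              · subst e
                simp only [reduceCtorEq, if_false, if_true]
                split_ifs <;> linarith
              · rw [← neg_of_var h e]
                simp only [reduceCtorEq, if_false, if_true]
                split_ifs <;> linarith
          · rw [dfar z m hz]
            simp only [reduceCtorEq, if_false]
            split_ifs <;> linarith
        · by_cases e : m' = m
          · subst e
            rw [dsym, docc l m' hl, d0]
            have := mul_le_mul_of_nonneg_left (ht1 m') hεpos.le
            simp
            linarith
          · rw [dcc m' m e]
            have := dle (Sum.inr m') (Sum.inl l)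
            simp [e]
            linarith
      · simp only [Finset.sum_add_distrib, Finset.sum_ite_eq', Finset.mem_univ, if_true]
        linarith
    have C1 : ∃ y : Lit N, y.1 = (b m).l1.1 ∧ (Sum.inl y : Pt N M) ∈ O := by
      by_contra hcon
      push Not at hcon
      exact B1 (b m).l1 (b m).l2 (Or.inl rfl) (fun z h => h) hcon
    have C2 : ∃ y : Lit N, y.1 = (b m).l2.1 ∧ (Sum.inl y : Pt N M) ∈ O := by
      by_contra hcon
      push Not at hcon
      exact B1 (b m).l2 (b m).l1 (Or.inr rfl) (fun z h => h.symm) hcon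
    obtain ⟨n, hn⟩ := hunc
    refine key _ hm (n, true) hn (fun p => if p = Sum.inr m then 1 + 2 * ε else 0) ?_ ?_ ?_
    · intro p
      split_ifs <;> linarith
    · intro p hp
      rcases p with z | m'
      · have h2 := (dlc z m).1
        have aux : ∀ y : Lit N, z.1 = y.1 → (Sum.inl y : Pt N M) ∈ O →
            ∃ o' ∈ insert (Sum.inl (n, true)) (O.erase (Sum.inr m)), d (Sum.inl z) o' ≤
              d (Sum.inl z) (Sum.inr m) +
                (if (Sum.inl z : Pt N M) = Sum.inr m then 1 + 2 * ε else 0) := by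
          intro y hy hyO
          refine ⟨Sum.inl y, by simp [hyO], ?_⟩
          have := dlit z y hy
          simp
          linarith
        by_cases hz : z.1 = (b m).l1.1 ∨ z.1 = (b m).l2.1
        · obtain ⟨y1, hy1, hyO1⟩ := C1
          obtain ⟨y2, hy2, hyO2⟩ := C2
          rcases hz with h | h
          · exact aux y1 (h.trans hy1.symm) hyO1
          · exact aux y2 (h.trans hy2.symm) hyO2
        · refine ⟨_, Finset.mem_insert_self _ _, ?_⟩
          rw [dfar z m hz]
          have := dle (Sum.inl z) (Sum.inl (n, true))
          simp
          linarith
      · refine ⟨_, Finset.mem_insert_self _ _, ?_⟩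
        have := dle (Sum.inr m') (Sum.inl (n, true))
        by_cases e : m' = m
        · subst e
          rw [d0]
          simp
          linarith
        · rw [dcc m' m e]
          simp [e]
          linarith
    · simp only [Finset.sum_ite_eq', Finset.mem_univ, if_true]
      linarith
  -- no uncovered variable
  have cover : ∀ n : Fin N, ∃ y : Lit N, y.1 = n ∧ (Sum.inl y : Pt N M) ∈ O := by
    intro n
    by_contra hcon
    push Not at hcon
    obtain ⟨y, hyO, hynO⟩ : ∃ y : Lit N, (Sum.inl y : Pt N M) ∈ O ∧
        (Sum.inl (Lit.neg y) : Pt N M) ∈ O := by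
      have hmap : Set.MapsTo (fun p : Pt N M => Sum.elim (fun x : Lit N => x.1) (fun _ => n) p)
          (O : Set (Pt N M)) ((Finset.univ.erase n : Finset (Fin N)) : Set (Fin N)) := by
        rintro (x | m) hp
        · simp only [Sum.elim_inl, Finset.coe_erase, Finset.coe_univ, Set.mem_sdiff, Set.mem_univ,
            Set.mem_singleton_iff, true_and]
          intro h
          exact hcon x h hp
        · exact absurd hp (noclause m)
      have hlt : (Finset.univ.erase n : Finset (Fin N)).card < O.card := by
        rw [Finset.card_erase_of_mem (Finset.mem_univ n), hcard]
        have := n.pos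
        simp
        omega
      obtain ⟨p, hp, q, hq, hpq, hf⟩ := Finset.exists_ne_map_eq_of_card_lt_of_maps_to hlt hmap
      rcases p with x | m
      · rcases q with y | m'
        · refine ⟨y, hq, ?_⟩
          rw [← neg_of_var hf (fun e => hpq (by rw [e]))]
          exact hp
        · exact absurd hq (noclause m')
      · exact absurd hp (noclause m)
    have hyn : Lit.neg y ≠ y := by
      intro h; have := congrArg Prod.snd h; simp [Lit.neg] at this
    have hmem : (Sum.inl (Lit.neg y) : Pt N M) ∈
        insert (Sum.inl (n, true)) (O.erase (Sum.inl y)) := by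
      simp [hynO, hyn]
    refine key _ hyO (n, true) hcon
      (fun p => (if p = Sum.inl y then 1 else 0)
        + Sum.elim (fun _ => 0) (fun m => ε * (c - 1) * t m) p) ?_ ?_ ?_
    · rintro (z | m)
      · dsimp only [Sum.elim_inl]
        split_ifs <;> norm_num
      · simp only [reduceCtorEq, if_false, Sum.elim_inr, zero_add]
        have := ht0 m
        have : 0 < c - 1 := by linarith
        positivity
    · rintro (z | m) hp
      · by_cases hz : z.1 = y.1
        · by_cases e : z = y
          · subst e
            refine ⟨_, hmem, ?_⟩
            have := dlit z (Lit.neg z) rfl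
            rw [d0]
            simp
            linarith
          · have e' := neg_of_var hz e
            refine ⟨_, hmem, ?_⟩
            have := hd (Sum.inl z) (Sum.inl y)
            rw [← e', d0]
            simp [e]
            linarith
        · refine ⟨_, hmem, ?_⟩
          rw [dll z y hz]
          have := dle (Sum.inl z) (Sum.inl (Lit.neg y))
          dsimp only [Sum.elim_inl]
          split_ifs <;> linarith
      · refine ⟨_, hmem, ?_⟩
        simp only [reduceCtorEq, if_false, Sum.elim_inr, zero_add]
        rw [dsym, dsym]
        by_cases hy : y.1 = (b m).l1.1 ∨ y.1 = (b m).l2.1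
        · have h1 := (dnear y m hy).1
          have h2 := (dnear (Lit.neg y) m hy).2
          nlinarith
        · rw [dfar y m hy, dfar (Lit.neg y) m hy]
          have := ht0 m
          have : 0 < c - 1 := by linarith
          have : 0 < ε * (c - 1) * t m := by positivity
          linarith
    · rw [Finset.sum_add_distrib, Finset.sum_ite_eq', if_pos (Finset.mem_univ _),
        Fintype.sum_sum_type]
      simp only [Sum.elim_inl, Sum.elim_inr, Finset.sum_const_zero, zero_add]
      rw [← Finset.mul_sum]
      have h1 : 0 < ε * (c - 1) := mul_pos hεpos (by linarith)
      have h2 := mul_le_mul_of_nonneg_left htsum h1.le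
      have h3 : ε * (c - 1) ≤ ε * 1 := mul_le_mul_of_nonneg_left (by linarith) hεpos.le
      linarith
  refine ⟨?_, hcard, ?_⟩
  · rintro (x | m) hp
    · exact ⟨x, rfl⟩
    · exact absurd hp (noclause m)
  · intro n
    obtain ⟨⟨y1, y2⟩, rfl, hy⟩ := cover n
    cases y2
    · exact Or.inr hy
    · exact Or.inl hy
end

section
/- There is no isometric embedding of the constructed DKM point set C into squared Euclidean space of dimension less than max{N, M} − 1. That is, if f : C → ℝ^D satisfies ‖f(p) − f(q)‖² = d(p,q) for all p, q ∈ C, then D ≥ max{N, M} − 1. -/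
open Finset
open scoped ENNReal

/-- `K` equidistant points in `ℝ^D` force `K - 1 ≤ D`. -/
theorem equidistant_dim {K D : ℕ} (g : Fin K → EuclideanSpace ℝ (Fin D)) (s : ℝ) (hs : 0 < s)
    (hg : ∀ i j, i ≠ j → ‖g i - g j‖ ^ 2 = s) : K - 1 ≤ D := by
  cases K with
  | zero => simp
  | succ k =>
    have hin : ∀ i j : Fin k, inner ℝ (g i.succ - g 0) (g j.succ - g 0)
        = s / 2 + if i = j then s / 2 else 0 := by
      intro i j
      have h1 := hg i.succ 0 (Fin.succ_ne_zero i)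
      have h2 := hg j.succ 0 (Fin.succ_ne_zero j)
      have h3 := norm_sub_sq_real (g i.succ - g 0) (g j.succ - g 0)
      rw [sub_sub_sub_cancel_right, h1, h2] at h3
      split_ifs with h
      · subst h
        simp only [sub_self, norm_zero] at h3
        linarith
      · rw [hg i.succ j.succ (fun e => h (Fin.succ_injective _ e))] at h3
        linarith
    have hli : LinearIndependent ℝ (fun i : Fin k => g i.succ - g 0) := by
      rw [Fintype.linearIndependent_iff]
      intro a ha
      have key : ∀ j, a j = -∑ i, a i := by
        intro j
        have h := congrArg (fun v => inner ℝ v (g j.succ - g 0)) ha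
        simp only [sum_inner, real_inner_smul_left, hin, inner_zero_left, mul_add,
          Finset.sum_add_distrib, mul_ite, mul_zero, Finset.sum_ite_eq', Finset.mem_univ,
          if_true, ← Finset.sum_mul] at h
        have h' : (∑ i, a i + a j) * (s / 2) = 0 := by linarith
        rcases mul_eq_zero.mp h' with h' | h' <;> linarith
      have hA : (∑ i, a i) = 0 := by
        have h : (∑ i, a i) = ∑ _i : Fin k, -∑ i, a i := Finset.sum_congr rfl (fun j _ => key j)
        simp only [Finset.sum_const, Finset.card_univ, Fintype.card_fin, nsmul_eq_mul] at h
        have h' : (∑ i, a i) * (1 + (k : ℝ)) = 0 := by linarith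
        rcases mul_eq_zero.mp h' with h' | h'
        · exact h'
        · have : (0 : ℝ) ≤ k := Nat.cast_nonneg k
          linarith
      intro j
      rw [key j, hA, neg_zero]
    have := hli.fintype_card_le_finrank
    simpa using this

/-- There is no isometric embedding of the DKM point set `C` into squared Euclidean
space of dimension less than `max {N, M} - 1`. -/
theorem dim_lower_bound_of_embedding {N M : ℕ} (hM : 2 ≤ M) (b : Fin M → Clause N) (w : Fin M → ℕ)
    (hw : ∀ m, 0 < w m) (c : ℝ) (hc1 : 1 < c) (hc2 : c < 2)
    (W : ℝ) (hW : W = (M : ℝ) * ((Finset.univ.sup w : ℕ) : ℝ))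
    (ε : ℝ) (hε : ε = 1 / (4 * (N : ℝ) + 2 * (M : ℝ)))
    (D : ℕ) (f : Pt N M → EuclideanSpace ℝ (Fin D))
    (hf : ∀ p q : Pt N M, ‖f p - f q‖ ^ 2 = dKM b w W c ε p q) :
    max N M - 1 ≤ D := by
  have hs : 0 < 1 + 2 * ε := by
    have : 0 ≤ ε := by rw [hε]; positivity
    linarith
  have h1 : N - 1 ≤ D := by
    refine equidistant_dim (fun n => f (Sum.inl (n, true))) _ hs (fun i j hij => ?_)
    rw [hf]
    simp [dKM, hij]
  have h2 : M - 1 ≤ D := by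
    refine equidistant_dim (fun m => f (Sum.inr m)) _ hs (fun i j hij => ?_)
    rw [hf]
    simp [dKM, hij]
  omega
end
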